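/- Let Ω ⊆ ℝ^d be an unbounded open set with Σ(Ω) < ∞, let k ≥ 1 and 1 ≤ p < ∞. Then Λ_{k,p}(Ω)^p ≤ Λ_{k−1,p}(Ω)^p + Σ(Ω)^p. Consequently, for every ℓ with 0 ≤ ℓ ≤ k one has Λ_{k,p}(Ω)^p ≤ Λ_{ℓ,p}(Ω)^p + (k−ℓ)·Σ(Ω)^p, the minimum over ℓ = 0,…,k−1 of Λ_{ℓ,p}(Ω)^p + (k−ℓ)·Σ(Ω)^p equals Λ_{k−1,p}(Ω)^p + Σ(Ω)^p, and Λ_{k,p}(Ω)^p ≤ k·Σ(Ω)^p. -/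

import Mathlib

/-!
Take a `k`-partition of `Ω` and near-optimal test functions `uᵢ` on its members. Their supports are
compact, hence all lie in one ball `B(0, R)`; cutting every member down to `ωᵢ ∩ B(0, R)` raises
its `λ` by at most `ε`, because `uᵢ` remains admissible. The set `Ω \ closedBall 0 R` is then open,
nonempty (`Ω` is unbounded) and disjoint from the rest, and its `λ` is at most `Σ(Ω)` by the
definition of `Σ(Ω)` as a supremum. This produces a `(k+1)`-partition (`exists_extension`), and
letting `ε → 0` and minimizing over partitions gives the threshold inequality (`LamP_succ_le`).
The same extension step, started from the empty partition, shows that partitions of every size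
exist, so the infima are never over the empty set. The remaining claims follow by iterating the
threshold inequality.
-/

open MeasureTheory Metric Set Filter
open scoped ENNReal Topology

noncomputable section

/-- Euclidean space `ℝ^d`. -/
abbrev Euc (d : ℕ) : Type := EuclideanSpace ℝ (Fin d)

/-- The Rayleigh quotient `R_V(u)` of the Schrödinger operator `-Δ + V`. -/
def RayleighQ (d : ℕ) (V : Euc d → ℝ) (u : Euc d → ℝ) : ℝ :=
  (∫ x, (‖gradient u x‖ ^ 2 + V x * u x ^ 2)) / (∫ x, u x ^ 2)

/-- `λ(ω)`: bottom of the spectrum of `-Δ + V` with Dirichlet conditions on `ω`,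
via the variational characterization over smooth compactly supported test functions
supported in `ω`. -/
def lambdaLow (d : ℕ) (V : Euc d → ℝ) (ω : Set (Euc d)) : ℝ :=
  sInf { r : ℝ | ∃ u : Euc d → ℝ, ContDiff ℝ (⊤ : ℕ∞) u ∧ HasCompactSupport u ∧ u ≠ 0 ∧
    tsupport u ⊆ ω ∧ r = RayleighQ d V u }

/-- The set `{ λ(ω \ K) : K ⊆ ℝ^d compact }` appearing in Persson's characterization
of the bottom of the essential spectrum. -/
def specSet (d : ℕ) (V : Euc d → ℝ) (ω : Set (Euc d)) : Set ℝ :=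
  { r : ℝ | ∃ K : Set (Euc d), IsCompact K ∧ r = lambdaLow d V (ω \ K) }

/-- `Σ(ω) := sup { λ(ω \ K) : K compact } ∈ [0,∞]`, as an extended real number. -/
def SigmaE (d : ℕ) (V : Euc d → ℝ) (ω : Set (Euc d)) : ℝ≥0∞ :=
  ⨆ K : { K : Set (Euc d) // IsCompact K }, ENNReal.ofReal (lambdaLow d V (ω \ K.1))

/-- `Σ(ω)` as a real number (meaningful when `specSet` is bounded above,
i.e. when `Σ(ω) < ∞`). -/
def SigmaR (d : ℕ) (V : Euc d → ℝ) (ω : Set (Euc d)) : ℝ :=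
  sSup (specSet d V ω)

/-- Open annulus `A_{r,R}(0) = { x : r < |x| < R }`. -/
def annulusO (d : ℕ) (r R : ℝ) : Set (Euc d) := { x : Euc d | r < ‖x‖ ∧ ‖x‖ < R }

/-- A `k`-partition of `Ω`: a `k`-tuple of pairwise disjoint nonempty open subsets of `Ω`. -/
def IsPartition (d : ℕ) (Ω : Set (Euc d)) {k : ℕ} (ω : Fin k → Set (Euc d)) : Prop :=
  (∀ i, IsOpen (ω i)) ∧ (∀ i, (ω i).Nonempty) ∧ (∀ i, ω i ⊆ Ω) ∧
    ∀ i j, i ≠ j → Disjoint (ω i) (ω j)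

/-- `Λ_{k,p}(Ω) := inf (∑ i λ(ωᵢ)^p)^(1/p)` over all `k`-partitions of `Ω`, `1 ≤ p < ∞`. -/
def LamP (d : ℕ) (V : Euc d → ℝ) (Ω : Set (Euc d)) (k : ℕ) (p : ℝ) : ℝ :=
  sInf { r : ℝ | ∃ ω : Fin k → Set (Euc d), IsPartition d Ω ω ∧
    r = (∑ i, lambdaLow d V (ω i) ^ p) ^ (1 / p) }

/-- `Λ_{k,∞}(Ω) := inf max_i λ(ωᵢ)` over all `k`-partitions of `Ω`. -/
def LamInf (d : ℕ) (V : Euc d → ℝ) (Ω : Set (Euc d)) (k : ℕ) : ℝ :=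
  sInf { r : ℝ | ∃ ω : Fin k → Set (Euc d), IsPartition d Ω ω ∧
    r = ⨆ i, lambdaLow d V (ω i) }

/-- Threshold value `T_{k,p}(Ω) := (Λ_{k-1,p}(Ω)^p + Σ(Ω)^p)^(1/p)` for `1 ≤ p < ∞`. -/
def ThreshT (d : ℕ) (V : Euc d → ℝ) (Ω : Set (Euc d)) (k : ℕ) (p : ℝ) : ℝ :=
  (LamP d V Ω (k - 1) p ^ p + SigmaR d V Ω ^ p) ^ (1 / p)

lemma RayleighQ_nonneg {d : ℕ} {V : Euc d → ℝ} (hV : ∀ x, 0 ≤ V x) (u : Euc d → ℝ) :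
    0 ≤ RayleighQ d V u := by
  unfold RayleighQ
  refine div_nonneg (integral_nonneg fun x => ?_) (integral_nonneg fun x => sq_nonneg _)
  have := hV x
  positivity

lemma lambdaLow_nonneg {d : ℕ} {V : Euc d → ℝ} (hV : ∀ x, 0 ≤ V x) (ω : Set (Euc d)) :
    0 ≤ lambdaLow d V ω := by
  refine Real.sInf_nonneg ?_
  rintro r ⟨u, -, -, -, -, rfl⟩
  exact RayleighQ_nonneg hV u

lemma lambdaLow_le {d : ℕ} {V : Euc d → ℝ} (hV : ∀ x, 0 ≤ V x) {ω : Set (Euc d)}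
    {u : Euc d → ℝ} (h1 : ContDiff ℝ (⊤ : ℕ∞) u) (h2 : HasCompactSupport u) (h3 : u ≠ 0)
    (h4 : tsupport u ⊆ ω) : lambdaLow d V ω ≤ RayleighQ d V u := by
  refine csInf_le ⟨0, ?_⟩ ⟨u, h1, h2, h3, h4, rfl⟩
  rintro r ⟨v, -, -, -, -, rfl⟩
  exact RayleighQ_nonneg hV v

/-- Near-optimal test functions exist on every nonempty open set; openness supplies a bump function,
so that the infimum defining `λ(ω)` is not over the empty set. -/
lemma exists_test {d : ℕ} (V : Euc d → ℝ) {ω : Set (Euc d)} (ho : IsOpen ω) (hne : ω.Nonempty)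
    {ε : ℝ} (hε : 0 < ε) :
    ∃ u : Euc d → ℝ, ContDiff ℝ (⊤ : ℕ∞) u ∧ HasCompactSupport u ∧ u ≠ 0 ∧ tsupport u ⊆ ω ∧
      RayleighQ d V u < lambdaLow d V ω + ε := by
  obtain ⟨x, hx⟩ := hne
  obtain ⟨f, hf1, hf2, hf3, -, hf4⟩ :=
    exists_contDiff_tsupport_subset (n := (⊤ : ℕ∞)) (ho.mem_nhds hx)
  have hf0 : f ≠ 0 := by
    rintro rfl
    simp at hf4
  obtain ⟨r, ⟨u, h1, h2, h3, h4, rfl⟩, hr⟩ :=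
    exists_lt_of_csInf_lt (s := { r : ℝ | ∃ u : Euc d → ℝ, ContDiff ℝ (⊤ : ℕ∞) u ∧
      HasCompactSupport u ∧ u ≠ 0 ∧ tsupport u ⊆ ω ∧ r = RayleighQ d V u })
      ⟨_, f, hf3, hf2, hf0, hf1, rfl⟩ (lt_add_of_pos_right _ hε)
  exact ⟨u, h1, h2, h3, h4, hr⟩

lemma SigmaR_nonneg {d : ℕ} {V : Euc d → ℝ} (hV : ∀ x, 0 ≤ V x) (Ω : Set (Euc d)) :
    0 ≤ SigmaR d V Ω := by
  refine Real.sSup_nonneg ?_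
  rintro r ⟨K, -, rfl⟩
  exact lambdaLow_nonneg hV _

/-- Extension step: cut the members of a partition down to a large ball and add the part of `Ω`
outside that ball as a new member. -/
lemma exists_extension {d : ℕ} {V : Euc d → ℝ} (hV : ∀ x, 0 ≤ V x) {Ω : Set (Euc d)}
    (hΩ : IsOpen Ω) (hunb : ¬ Bornology.IsBounded Ω) (hbdd : BddAbove (specSet d V Ω))
    {k : ℕ} {ω : Fin k → Set (Euc d)} (hω : IsPartition d Ω ω) {ε : ℝ} (hε : 0 < ε) :
    ∃ ω' : Fin (k + 1) → Set (Euc d), IsPartition d Ω ω' ∧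
      lambdaLow d V (ω' 0) ≤ SigmaR d V Ω ∧
      ∀ i : Fin k, lambdaLow d V (ω' i.succ) ≤ lambdaLow d V (ω i) + ε := by
  obtain ⟨ho, hne, hsub, hdisj⟩ := hω
  -- All supports of the test functions fit in one ball of radius `R`.
  choose u h1 h2 h3 h4 h5 using fun i => exists_test V (ho i) (hne i) hε
  have hK : IsCompact (⋃ i, tsupport (u i)) := isCompact_iUnion fun i => h2 i
  obtain ⟨R, hR⟩ := hK.isBounded.subset_ball (0 : Euc d)
  have hR' : ∀ i, tsupport (u i) ⊆ ball (0 : Euc d) R := fun i =>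
    (subset_iUnion (fun i => tsupport (u i)) i).trans hR
  have hnew : ∀ i, Disjoint (Ω \ closedBall (0 : Euc d) R) (ω i ∩ ball 0 R) := fun i =>
    Set.disjoint_left.2 fun x hx hx' => hx.2 (ball_subset_closedBall hx'.2)
  refine ⟨Fin.cons (Ω \ closedBall 0 R) fun i => ω i ∩ ball 0 R, ⟨?_, ?_, ?_, ?_⟩, ?_, ?_⟩
  · refine Fin.cases ?_ fun i => ?_
    · simpa using hΩ.sdiff isClosed_closedBall
    · simpa using (ho i).inter isOpen_ball
  · refine Fin.cases ?_ fun i => ?_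
    · simp only [Fin.cons_zero]
      refine Set.sdiff_nonempty.2 fun h => hunb (isBounded_closedBall.subset h)
    · simp only [Fin.cons_succ]
      obtain ⟨x, hx⟩ := Function.ne_iff.1 (h3 i)
      have hx' := subset_tsupport (u i) (Function.mem_support.2 hx)
      exact ⟨x, h4 i hx', hR' i hx'⟩
  · refine Fin.cases ?_ fun i => ?_
    · simp
    · simpa using inter_subset_left.trans (hsub i)
  · refine Fin.cases (Fin.cases ?_ fun j => ?_) fun i => Fin.cases ?_ fun j => ?_
    · intro h
      exact absurd rfl h
    · intro _
      simpa using hnew j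
    · intro _
      simpa using (hnew i).symm
    · intro h
      simp only [Fin.cons_succ]
      exact (hdisj i j fun e => h (by rw [e])).mono inter_subset_left inter_subset_left
  · simp only [Fin.cons_zero]
    exact le_csSup hbdd ⟨_, isCompact_closedBall 0 R, rfl⟩
  · intro i
    simp only [Fin.cons_succ]
    exact (lambdaLow_le hV (h1 i) (h2 i) (h3 i) (subset_inter (h4 i) (hR' i))).trans (h5 i).le

lemma exists_partition {d : ℕ} {V : Euc d → ℝ} (hV : ∀ x, 0 ≤ V x) {Ω : Set (Euc d)}
    (hΩ : IsOpen Ω) (hunb : ¬ Bornology.IsBounded Ω) (hbdd : BddAbove (specSet d V Ω)) (k : ℕ) :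
    ∃ ω : Fin k → Set (Euc d), IsPartition d Ω ω := by
  induction k with
  | zero => exact ⟨fun _ => ∅, by simp [IsPartition]⟩
  | succ k ih =>
    obtain ⟨ω, hω⟩ := ih
    obtain ⟨ω', hω', -⟩ := exists_extension hV hΩ hunb hbdd hω one_pos
    exact ⟨ω', hω'⟩

lemma LamP_nonneg {d : ℕ} {V : Euc d → ℝ} (hV : ∀ x, 0 ≤ V x) (Ω : Set (Euc d)) (k : ℕ) (p : ℝ) :
    0 ≤ LamP d V Ω k p := by
  refine Real.sInf_nonneg ?_
  rintro r ⟨ω, -, rfl⟩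
  exact Real.rpow_nonneg (Finset.sum_nonneg fun i _ => Real.rpow_nonneg (lambdaLow_nonneg hV _) _) _

lemma LamP_rpow_le {d : ℕ} {V : Euc d → ℝ} (hV : ∀ x, 0 ≤ V x) {Ω : Set (Euc d)} {k : ℕ} {p : ℝ}
    (hp : 1 ≤ p) {ω : Fin k → Set (Euc d)} (hω : IsPartition d Ω ω) :
    LamP d V Ω k p ^ p ≤ ∑ i, lambdaLow d V (ω i) ^ p := by
  have hs : ∀ {ω : Fin k → Set (Euc d)}, 0 ≤ ∑ i, lambdaLow d V (ω i) ^ p := fun {ω} =>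
    Finset.sum_nonneg fun i _ => Real.rpow_nonneg (lambdaLow_nonneg hV _) _
  have hle : LamP d V Ω k p ≤ (∑ i, lambdaLow d V (ω i) ^ p) ^ (1 / p) := by
    refine csInf_le ⟨0, ?_⟩ ⟨ω, hω, rfl⟩
    rintro r ⟨ω, -, rfl⟩
    exact Real.rpow_nonneg hs _
  rw [one_div] at hle
  exact (Real.le_rpow_inv_iff_of_pos (LamP_nonneg hV Ω k p) hs (by linarith)).1 hle

/-- A lower bound for `∑ λ(ωᵢ)^p` over all partitions is a lower bound for `Λ_{k,p}(Ω)^p`. -/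
lemma le_LamP_rpow {d : ℕ} {V : Euc d → ℝ} (hV : ∀ x, 0 ≤ V x) {Ω : Set (Euc d)} {k : ℕ} {p : ℝ}
    (hp : 1 ≤ p) (hex : ∃ ω : Fin k → Set (Euc d), IsPartition d Ω ω) {A : ℝ}
    (hA : ∀ ω : Fin k → Set (Euc d), IsPartition d Ω ω → A ≤ ∑ i, lambdaLow d V (ω i) ^ p) :
    A ≤ LamP d V Ω k p ^ p := by
  have hL := LamP_nonneg hV Ω k p
  -- Real powers misbehave at negative bases, so `A ≤ 0` is treated apart.
  rcases le_or_gt A 0 with h0 | h0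
  · exact h0.trans (Real.rpow_nonneg hL _)
  refine (Real.rpow_inv_le_iff_of_pos h0.le hL (by linarith)).1 ?_
  obtain ⟨ω₀, hω₀⟩ := hex
  refine le_csInf ⟨_, ω₀, hω₀, rfl⟩ ?_
  rintro r ⟨ω, hω, rfl⟩
  rw [one_div]
  exact Real.rpow_le_rpow h0.le (hA ω hω) (by positivity)

lemma LamP_zero_rpow {d : ℕ} {V : Euc d → ℝ} (hV : ∀ x, 0 ≤ V x) (Ω : Set (Euc d)) {p : ℝ}
    (hp : 1 ≤ p) : LamP d V Ω 0 p ^ p = 0 := by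
  refine le_antisymm ?_ (Real.rpow_nonneg (LamP_nonneg hV Ω 0 p) _)
  have h : IsPartition d Ω (fun _ : Fin 0 => (∅ : Set (Euc d))) := by simp [IsPartition]
  simpa using LamP_rpow_le hV hp h

/-- The threshold inequality `Λ_{k+1,p}(Ω)^p ≤ Λ_{k,p}(Ω)^p + Σ(Ω)^p`. -/
lemma LamP_succ_le {d : ℕ} {V : Euc d → ℝ} (hV : ∀ x, 0 ≤ V x) {Ω : Set (Euc d)}
    (hΩ : IsOpen Ω) (hunb : ¬ Bornology.IsBounded Ω) (hbdd : BddAbove (specSet d V Ω))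
    (k : ℕ) {p : ℝ} (hp : 1 ≤ p) :
    LamP d V Ω (k + 1) p ^ p ≤ LamP d V Ω k p ^ p + SigmaR d V Ω ^ p := by
  have hp0 : 0 ≤ p := by linarith
  rw [← sub_le_iff_le_add]
  refine le_LamP_rpow hV hp (exists_partition hV hΩ hunb hbdd k) fun ω hω => ?_
  have key : ∀ ε > 0, LamP d V Ω (k + 1) p ^ p - SigmaR d V Ω ^ p ≤
      ∑ i, (lambdaLow d V (ω i) + ε) ^ p := by
    intro ε hε
    obtain ⟨ω', hω', h0, hs⟩ := exists_extension hV hΩ hunb hbdd hω hε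
    have h := LamP_rpow_le hV hp hω'
    rw [Fin.sum_univ_succ] at h
    have h0' := Real.rpow_le_rpow (lambdaLow_nonneg hV _) h0 hp0
    have hs' := Finset.sum_le_sum fun i (_ : i ∈ Finset.univ) =>
      Real.rpow_le_rpow (lambdaLow_nonneg hV _) (hs i) hp0
    linarith
  have hcont : Continuous fun ε : ℝ => ∑ i, (lambdaLow d V (ω i) + ε) ^ p :=
    continuous_finsetSum _ fun i _ =>
      (continuous_const.add continuous_id).rpow_const fun _ => Or.inr hp0
  have hlim := (hcont.tendsto 0).mono_left (nhdsWithin_le_nhds (s := Ioi 0))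
  simp only [add_zero] at hlim
  exact ge_of_tendsto hlim (eventually_mem_nhdsWithin.mono key)

lemma LamP_add_le {d : ℕ} {V : Euc d → ℝ} (hV : ∀ x, 0 ≤ V x) {Ω : Set (Euc d)}
    (hΩ : IsOpen Ω) (hunb : ¬ Bornology.IsBounded Ω) (hbdd : BddAbove (specSet d V Ω))
    {p : ℝ} (hp : 1 ≤ p) (l m : ℕ) :
    LamP d V Ω (l + m) p ^ p ≤ LamP d V Ω l p ^ p + (m : ℝ) * SigmaR d V Ω ^ p := by
  induction m with
  | zero => simp
  | succ m ih =>
    have h := LamP_succ_le hV hΩ hunb hbdd (l + m) hp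
    rw [← add_assoc]
    push_cast
    linarith

/-- the threshold inequality `Λ_{k,p}^p ≤ Λ_{k-1,p}^p + Σ^p` and its
consequences. -/
theorem statement_4 (d : ℕ) (hd : 2 ≤ d) (V : Euc d → ℝ)
    (hVmeas : Measurable V)
    (hVloc : ∀ K : Set (Euc d), IsCompact K → ∃ C : ℝ, ∀ x ∈ K, V x ≤ C)
    (hVpos : ∀ x, 0 ≤ V x)
    (Ω : Set (Euc d)) (hΩ : IsOpen Ω) (hunb : ¬ Bornology.IsBounded Ω)
    (hbdd : BddAbove (specSet d V Ω))
    (k : ℕ) (hk : 1 ≤ k) (p : ℝ) (hp : 1 ≤ p) :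
    LamP d V Ω k p ^ p ≤ LamP d V Ω (k - 1) p ^ p + SigmaR d V Ω ^ p ∧
    (∀ ℓ : ℕ, ℓ ≤ k →
        LamP d V Ω k p ^ p ≤ LamP d V Ω ℓ p ^ p + ((k : ℝ) - ℓ) * SigmaR d V Ω ^ p) ∧
    ((Finset.range k).inf' (Finset.nonempty_range_iff.mpr (by omega))
        (fun ℓ => LamP d V Ω ℓ p ^ p + ((k : ℝ) - ℓ) * SigmaR d V Ω ^ p)
      = LamP d V Ω (k - 1) p ^ p + SigmaR d V Ω ^ p) ∧
    LamP d V Ω k p ^ p ≤ (k : ℝ) * SigmaR d V Ω ^ p := by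
  have hall : ∀ k ℓ : ℕ, ℓ ≤ k →
      LamP d V Ω k p ^ p ≤ LamP d V Ω ℓ p ^ p + ((k : ℝ) - ℓ) * SigmaR d V Ω ^ p := by
    intro k ℓ hℓ
    obtain ⟨m, rfl⟩ := Nat.exists_eq_add_of_le hℓ
    simpa using LamP_add_le hVpos hΩ hunb hbdd hp ℓ m
  obtain ⟨n, rfl⟩ := Nat.exists_eq_add_of_le' hk
  have hstep := LamP_succ_le hVpos hΩ hunb hbdd n hp
  refine ⟨hstep, hall _, ?_, ?_⟩
  · rw [Nat.add_sub_cancel]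
    apply le_antisymm
    · refine (Finset.inf'_le _ (Finset.mem_range.2 n.lt_succ_self)).trans_eq ?_
      push_cast
      ring
    · refine Finset.le_inf' _ _ fun ℓ hℓ => ?_
      have h := hall n ℓ (Nat.lt_succ_iff.1 (Finset.mem_range.1 hℓ))
      push_cast
      linarith
  · have h := hall (n + 1) 0 (Nat.zero_le _)
    rw [LamP_zero_rpow hVpos Ω hp] at h
    simpa using h
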